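/- There exist universal constants C̃, c̃ > 0 such that: for any a < b, any class F of [a,b]-valued functions on X, any x ∈ X^{2m}, and any 0 < ζ < (b−a)/2 with fat_{c̃ζ}(F) < ∞, the packing number of the restricted class satisfies P(F(x), d_2, ζ) ≤ ((b−a)/(c̃ζ))^{C̃·fat_{c̃ζ}(F)}. In particular the packing number is finite. -/

import Mathlib

open Finset

/-- The normalized Euclidean metric on `ℝ^{2m}`. -/
noncomputable def d2 {m : ℕ} (g h : Fin (2 * m) → ℝ) : ℝ :=
  Real.sqrt ((1 / (2 * m : ℝ)) * ∑ i, (g i - h i) ^ 2)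

/-- The `δ`-packing number of a set `M` with respect to a distance `d`. -/
noncomputable def packingNumber {E : Type*} (M : Set E) (d : E → E → ℝ) (δ : ℝ) : ℕ∞ :=
  ⨆ (S : Finset E) (_ : ↑S ⊆ M ∧ ∀ x ∈ S, ∀ y ∈ S, x ≠ y → δ < d x y), (S.card : ℕ∞)

/-- A finite set `S` is `γ`-shattered by `F` if some level function `r` witnesses every
subset of `S` with margin `γ`. -/
def FatShatters {X : Type*} (F : Set (X → ℝ)) (γ : ℝ) (S : Finset X) : Prop :=
  ∃ r : X → ℝ, ∀ B ⊆ S, ∃ f ∈ F,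
    (∀ x ∈ B, r x + γ ≤ f x) ∧ (∀ x ∈ S, x ∉ B → f x ≤ r x - γ)

/-- The fat-shattering dimension of `F` at scale `γ`, as an extended natural number. -/
noncomputable def fatDim {X : Type*} (F : Set (X → ℝ)) (γ : ℝ) : ℕ∞ :=
  ⨆ (S : Finset X) (_ : FatShatters F γ S), (S.card : ℕ∞)

/-! Let `A` be a finite `ζ`-separated subset of `F(x)`, and write `N = #A` and `R = b - a`.

A family of functions with large total variance at some coordinate has a small-deviation property:
there is a gap of length proportional to `ζ` such that the parts `D` and `U` below and above it
satisfy `√N ≤ √#D + √#U`. Otherwise the upper tails, and by symmetry the lower ones, would at least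
halve over each such length, starting from the median, and the variance would be small.
Separation passes to subsets, and a separated set with at least two elements has large variance
at some coordinate, so `A` can be split repeatedly down to single functions.

Every set of (coordinate, level) pairs shattered by `D` or by `U` is shattered by `A`, and if `S` is
shattered by both then so is `S` together with the pair given by the gap. Hence the number of
shattered sets is superadditive under splitting, and `A` shatters at least `√N` of them. Each has
at most `d = fat(F)` elements of a grid of about `nR/ζ` pairs, where `n` is the number of
coordinates, so `√N ≤ exp (l n R/ζ) / l ^ d` for all `0 < l ≤ 1`.

To remove the dependence on `n`, restrict to `O((R/ζ)² log N)` random coordinates, which keep `A`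
separated up to a factor of `2` with positive probability. With `l = (ζ/R)³` up to a constant, the
exponential is then at most `N ^ (1/4)`, which gives `N ≤ (R/(cζ)) ^ (12 d)`. -/

/-! ### Small deviations -/

/-- Two parts `D` and `U` of a finite set `A` which are nonempty and large enough that the lower
bound `√#A` for the number of sets shattered by `A` follows from the same bound for `D` and `U`. -/
structure IsSqrtSplit {E : Type*} (A D U : Finset E) : Prop where
  nonempty_left : D.Nonempty
  nonempty_right : U.Nonempty
  sqrt_le : √(#A : ℝ) ≤ √(#D : ℝ) + √(#U : ℝ)

section SmallDeviation

variable {E : Type*} {A D D' U U' : Finset E}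

lemma IsSqrtSplit.symm (h : IsSqrtSplit A D U) : IsSqrtSplit A U D :=
  ⟨h.nonempty_right, h.nonempty_left, h.sqrt_le.trans_eq (add_comm _ _)⟩

lemma IsSqrtSplit.mono (h : IsSqrtSplit A D U) (hD : D ⊆ D') (hU : U ⊆ U') :
    IsSqrtSplit A D' U' where
  nonempty_left := h.nonempty_left.mono hD
  nonempty_right := h.nonempty_right.mono hU
  sqrt_le := h.sqrt_le.trans <| by gcongr

lemma sum_range_two_mul_add_one (K : ℕ) : ∑ k ∈ range K, (2 * (k : ℝ) + 1) = (K : ℝ) ^ 2 := by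
  induction K with
  | zero => simp
  | succ K ih => rw [sum_range_succ, ih]; push_cast; ring

lemma sum_range_two_mul_add_one_div_two_pow (K : ℕ) :
    ∑ k ∈ range K, (2 * (k : ℝ) + 1) / 2 ^ (k + 1) = 3 - (2 * K + 3) / 2 ^ K := by
  induction K with
  | zero => simp
  | succ K ih => rw [sum_range_succ, ih]; push_cast; field_simp; ring

lemma sq_posPart_le_sum_range {y : ℝ} {K : ℕ} (hK : y ≤ K) :
    y⁺ ^ 2 ≤ ∑ k ∈ range K, if (k : ℝ) < y then 2 * (k : ℝ) + 1 else 0 := by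
  have hfilter : {k ∈ range K | ((k : ℕ) : ℝ) < y} = range ⌈y⌉₊ := by
    ext k
    simp only [mem_filter, mem_range, Nat.lt_ceil, and_iff_right_iff_imp]
    exact fun hk ↦ by exact_mod_cast hk.trans_le hK
  rw [← sum_filter, hfilter, sum_range_two_mul_add_one]
  gcongr
  exact sup_le (Nat.le_ceil y) (Nat.cast_nonneg _)

lemma sum_sq_posPart_le {y : E → ℝ}
    (htail : ∀ k : ℕ, (#{f ∈ A | (k : ℝ) < y f} : ℝ) ≤ #A / 2 ^ (k + 1)) :
    ∑ f ∈ A, (y f)⁺ ^ 2 ≤ 3 * #A := by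
  obtain ⟨K, hK⟩ : ∃ K : ℕ, ∀ f ∈ A, y f ≤ K := by
    refine ⟨A.sup fun f ↦ ⌈y f⌉₊, fun f hf ↦ (Nat.le_ceil _).trans ?_⟩
    exact_mod_cast le_sup (f := fun f ↦ ⌈y f⌉₊) hf
  calc ∑ f ∈ A, (y f)⁺ ^ 2
      ≤ ∑ f ∈ A, ∑ k ∈ range K, (if (k : ℝ) < y f then 2 * (k : ℝ) + 1 else 0) :=
        sum_le_sum fun f hf ↦ sq_posPart_le_sum_range (hK f hf)
    _ = ∑ k ∈ range K, #{f ∈ A | (k : ℝ) < y f} * (2 * (k : ℝ) + 1) := by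
        rw [sum_comm]
        exact sum_congr rfl fun k _ ↦ by rw [← sum_filter, sum_const, nsmul_eq_mul]
    _ ≤ ∑ k ∈ range K, #A / 2 ^ (k + 1) * (2 * (k : ℝ) + 1) := by
        gcongr with k _
        exact htail k
    _ = #A * (3 - (2 * K + 3) / 2 ^ K) := by
        rw [← sum_range_two_mul_add_one_div_two_pow, mul_sum]
        exact sum_congr rfl fun k _ ↦ by ring
    _ ≤ #A * 3 := by
        gcongr
        exact sub_le_self _ (by positivity)
    _ = 3 * #A := mul_comm _ _

lemma le_half_of_sqrt_sub_add_sqrt_lt {N u v : ℝ} (hu : 0 ≤ u) (hv : 0 ≤ v) (huN : u ≤ N / 2)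
    (h : √(N - u) + √v < √N) : v ≤ u / 2 := by
  have hN : 0 ≤ N := by linarith
  have hmul : N - 3 * u / 4 ≤ √N * √(N - u) := by
    rw [← Real.sqrt_mul hN]
    apply Real.le_sqrt_of_sq_le
    nlinarith
  calc v = √v ^ 2 := (Real.sq_sqrt hv).symm
    _ ≤ (√N - √(N - u)) ^ 2 := by gcongr; linarith
    _ = N + (N - u) - 2 * (√N * √(N - u)) := by
        rw [sub_sq, Real.sq_sqrt hN, Real.sq_sqrt (by linarith)]; ring
    _ ≤ u / 2 := by linarith

lemma card_add_one_le_le_half {X : E → ℝ} {s : ℝ}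
    (hhalf : (#{f ∈ A | s < X f} : ℝ) ≤ #A / 2)
    (hsplit : ¬ IsSqrtSplit A {f ∈ A | X f ≤ s} {f ∈ A | s + 1 ≤ X f}) :
    (#{f ∈ A | s + 1 ≤ X f} : ℝ) ≤ #{f ∈ A | s < X f} / 2 := by
  rcases eq_empty_or_nonempty {f ∈ A | s + 1 ≤ X f} with hU | hU
  · rw [hU, card_empty, Nat.cast_zero]
    positivity
  have hA : (0 : ℝ) < #A := by exact_mod_cast (hU.mono (filter_subset _ _)).card_pos
  have hcompl : (#{f ∈ A | X f ≤ s} : ℝ) = #A - #{f ∈ A | s < X f} := by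
    rw [eq_sub_iff_add_eq]
    have := card_filter_add_card_filter_not (s := A) (fun f ↦ X f ≤ s)
    simp only [not_le] at this
    exact_mod_cast this
  have hD : {f ∈ A | X f ≤ s}.Nonempty := by
    rw [← card_pos, ← Nat.cast_pos (α := ℝ), hcompl]
    linarith
  refine le_half_of_sqrt_sub_add_sqrt_lt (by positivity) (by positivity) hhalf ?_
  rw [← hcompl]
  exact not_le.1 fun h ↦ hsplit ⟨hD, hU, h⟩

lemma card_lt_le_div_two_pow {X : E → ℝ} {M : ℝ} (hM : 2 * #{f ∈ A | M < X f} ≤ #A)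
    (hsplit : ∀ s, ¬ IsSqrtSplit A {f ∈ A | X f ≤ s} {f ∈ A | s + 1 ≤ X f}) (k : ℕ) :
    (#{f ∈ A | M + k < X f} : ℝ) ≤ #A / 2 ^ (k + 1) := by
  induction k with
  | zero =>
    rw [Nat.cast_zero, add_zero, zero_add, pow_one, le_div_iff₀' two_pos]
    exact_mod_cast hM
  | succ k ih =>
    have hhalf : (#{f ∈ A | M + k < X f} : ℝ) ≤ #A / 2 := by
      refine ih.trans ?_
      gcongr
      exact le_self_pow₀ one_le_two k.succ_ne_zero
    calc (#{f ∈ A | M + (k + 1 : ℕ) < X f} : ℝ)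
        ≤ #{f ∈ A | M + k + 1 ≤ X f} := by
          gcongr with f
          push_cast
          intro h
          linarith
      _ ≤ #{f ∈ A | M + k < X f} / 2 := card_add_one_le_le_half hhalf (hsplit _)
      _ ≤ #A / 2 ^ (k + 1) / 2 := by gcongr
      _ = #A / 2 ^ (k + 1 + 1) := by rw [div_div, ← pow_succ]

lemma exists_median (A : Finset E) (X : E → ℝ) :
    ∃ M, 2 * #{f ∈ A | M < X f} ≤ #A ∧ 2 * #{f ∈ A | X f < M} ≤ #A := by
  rcases A.eq_empty_or_nonempty with rfl | hA
  · simp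
  set G := {g ∈ A | 2 * #{f ∈ A | X g < X f} ≤ #A}
  have hG : G.Nonempty := by
    obtain ⟨g, hg, hmax⟩ := A.exists_max_image X hA
    refine ⟨g, mem_filter.2 ⟨hg, ?_⟩⟩
    rw [filter_eq_empty_iff.2 fun f hf ↦ not_lt.2 (hmax f hf)]
    exact Nat.zero_le _
  obtain ⟨g, hg, hmin⟩ := G.exists_min_image X hG
  refine ⟨X g, (mem_filter.1 hg).2, ?_⟩
  rcases eq_empty_or_nonempty {f ∈ A | X f < X g} with he | hne
  · rw [he]
    exact Nat.zero_le _
  obtain ⟨g', hg', hmax⟩ := exists_max_image _ X hne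
  obtain ⟨hg'A, hg'g⟩ := mem_filter.1 hg'
  have hupper : #A < 2 * #{f ∈ A | X g' < X f} :=
    not_le.1 fun h ↦ (hmin g' (mem_filter.2 ⟨hg'A, h⟩)).not_gt hg'g
  have hlower : #{f ∈ A | X f < X g} ≤ #{f ∈ A | ¬ X g' < X f} :=
    card_le_card fun f hf ↦ mem_filter.2 ⟨(mem_filter.1 hf).1, (hmax f hf).not_gt⟩
  have := card_filter_add_card_filter_not (s := A) (fun f ↦ X g' < X f)
  omega

lemma sum_sum_sq_sub_le (A : Finset E) (X : E → ℝ) (M : ℝ) :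
    ∑ f ∈ A, ∑ g ∈ A, (X f - X g) ^ 2 ≤ 2 * #A * ∑ f ∈ A, (X f - M) ^ 2 := by
  have hexpand : ∀ f g, (X f - X g) ^ 2 =
      (X f - M) ^ 2 + (X g - M) ^ 2 - 2 * ((X f - M) * (X g - M)) := fun f g ↦ by ring
  have hsq := sq_nonneg (∑ f ∈ A, (X f - M))
  simp only [hexpand, sum_sub_distrib, sum_add_distrib, sum_const, nsmul_eq_mul, ← mul_sum,
    ← sum_mul] at hsq ⊢
  linarith

lemma exists_isSqrtSplit {X : E → ℝ}
    (hvar : 12 * (#A : ℝ) ^ 2 < ∑ f ∈ A, ∑ g ∈ A, (X f - X g) ^ 2) :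
    ∃ s, IsSqrtSplit A {f ∈ A | X f ≤ s} {f ∈ A | s + 1 ≤ X f} := by
  by_contra! hsplit
  obtain ⟨M, hupper, hlower⟩ := exists_median A X
  have hsplit_neg : ∀ s, ¬ IsSqrtSplit A {f ∈ A | -X f ≤ s} {f ∈ A | s + 1 ≤ -X f} := by
    refine fun s h ↦ hsplit (-s - 1) (h.symm.mono ?_ ?_) <;>
      exact monotone_filter_right _ fun f _ ↦ by intro; linarith
  have hpos : ∑ f ∈ A, (X f - M)⁺ ^ 2 ≤ 3 * #A :=
    sum_sq_posPart_le fun k ↦ by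
      simpa only [lt_sub_iff_add_lt'] using card_lt_le_div_two_pow hupper hsplit k
  have hneg : ∑ f ∈ A, (-X f - -M)⁺ ^ 2 ≤ 3 * #A :=
    sum_sq_posPart_le fun k ↦ by
      simpa only [lt_sub_iff_add_lt'] using
        card_lt_le_div_two_pow (by simpa only [neg_lt_neg_iff] using hlower) hsplit_neg k
  have hsum : ∑ f ∈ A, (X f - M) ^ 2 = ∑ f ∈ A, (X f - M)⁺ ^ 2 + ∑ f ∈ A, (-X f - -M)⁺ ^ 2 := by
    rw [← sum_add_distrib]
    refine sum_congr rfl fun f _ ↦ ?_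
    rcases le_total (X f) M with h | h
    · rw [posPart_eq_zero.2 (by linarith), posPart_of_nonneg (by linarith)]; ring
    · rw [posPart_of_nonneg (by linarith), posPart_eq_zero.2 (by linarith)]; ring
  refine hvar.not_ge ?_
  calc ∑ f ∈ A, ∑ g ∈ A, (X f - X g) ^ 2
      ≤ 2 * #A * ∑ f ∈ A, (X f - M) ^ 2 := sum_sum_sq_sub_le A X M
    _ ≤ 2 * #A * (3 * #A + 3 * #A) := by rw [hsum]; gcongr
    _ = 12 * (#A : ℝ) ^ 2 := by ring

end SmallDeviation

/-! ### Counting shattered sets -/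

/-- `γ`-shattering of `S` by `F` with a prescribed level function `r`, so that
`FatShatters F γ S` is `∃ r, FatShattersAt F γ r S`. Fixing the level lets the sets
shattered by two subclasses be combined. -/
def FatShattersAt {X : Type*} (F : Set (X → ℝ)) (γ : ℝ) (r : X → ℝ) (S : Finset X) : Prop :=
  ∀ B ⊆ S, ∃ f ∈ F, (∀ x ∈ B, r x + γ ≤ f x) ∧ (∀ x ∈ S, x ∉ B → f x ≤ r x - γ)

open Classical in
/-- The family of all subsets of `P` which `F` shatters with margin `γ` at the level `r`; compare
`Finset.shatterer`. -/
noncomputable def fatShatterer {X : Type*} (F : Set (X → ℝ)) (γ : ℝ) (r : X → ℝ) (P : Finset X) :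
    Finset (Finset X) :=
  {S ∈ P.powerset | FatShattersAt F γ r S}

section FatShattering

variable {X Y E : Type*} {F G U D : Set (X → ℝ)} {γ : ℝ} {r : X → ℝ} {S P : Finset X} {p q : X}

lemma FatShattersAt.fatShatters (h : FatShattersAt F γ r S) : FatShatters F γ S := ⟨r, h⟩

lemma FatShattersAt.mono (h : FatShattersAt F γ r S) (hFG : F ⊆ G) : FatShattersAt G γ r S :=
  fun B hB ↦ let ⟨f, hf, hfB⟩ := h B hB; ⟨f, hFG hf, hfB⟩

lemma FatShattersAt.empty (hF : F.Nonempty) : FatShattersAt F γ r ∅ := by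
  intro B hB
  obtain ⟨f, hf⟩ := hF
  rw [subset_empty.1 hB]
  exact ⟨f, hf, by simp, by simp⟩

lemma FatShattersAt.exists_le_sub (h : FatShattersAt F γ r S) (hp : p ∈ S) :
    ∃ f ∈ F, f p ≤ r p - γ :=
  let ⟨f, hf, _, hlow⟩ := h ∅ (empty_subset _); ⟨f, hf, hlow p hp (notMem_empty p)⟩

lemma FatShattersAt.exists_add_le (h : FatShattersAt F γ r S) (hp : p ∈ S) :
    ∃ f ∈ F, r p + γ ≤ f p :=
  let ⟨f, hf, hhigh, _⟩ := h S Subset.rfl; ⟨f, hf, hhigh p hp⟩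

lemma FatShattersAt.exists_add_le_and_le_sub (h : FatShattersAt F γ r S) (hp : p ∈ S)
    (hq : q ∈ S) (hpq : p ≠ q) : ∃ f ∈ F, r p + γ ≤ f p ∧ f q ≤ r q - γ :=
  let ⟨f, hf, hhigh, hlow⟩ := h {p} (singleton_subset_iff.2 hp)
  ⟨f, hf, hhigh p (mem_singleton_self p), hlow q hq (notMem_singleton.2 hpq.symm)⟩

lemma FatShattersAt.insert_union [DecidableEq X] (hU : FatShattersAt U γ r S)
    (hD : FatShattersAt D γ r S) (hUp : ∀ f ∈ U, r p + γ ≤ f p) (hDp : ∀ f ∈ D, f p ≤ r p - γ) :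
    FatShattersAt (U ∪ D) γ r (insert p S) := by
  intro B hB
  by_cases hpB : p ∈ B
  · obtain ⟨f, hf, hhigh, hlow⟩ := hU (B.erase p) (subset_insert_iff.1 hB)
    refine ⟨f, .inl hf, fun q hq ↦ ?_, fun q hq hqB ↦ ?_⟩
    · obtain rfl | hqp := eq_or_ne q p
      exacts [hUp f hf, hhigh q (mem_erase.2 ⟨hqp, hq⟩)]
    · exact hlow q (mem_of_mem_insert_of_ne hq (ne_of_mem_of_not_mem hpB hqB).symm)
        (mt mem_of_mem_erase hqB)
  · obtain ⟨f, hf, hhigh, hlow⟩ := hD B ((subset_insert_iff_of_notMem hpB).1 hB)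
    refine ⟨f, .inr hf, hhigh, fun q hq hqB ↦ ?_⟩
    obtain rfl | hqS := mem_insert.1 hq
    exacts [hDp f hf, hlow q hqS hqB]

lemma mem_fatShatterer : S ∈ fatShatterer F γ r P ↔ S ⊆ P ∧ FatShattersAt F γ r S := by
  classical
  rw [fatShatterer, mem_filter, mem_powerset]

lemma card_fatShatterer_add_card_fatShatterer_le (hγ : 0 < γ) (hp : p ∈ P)
    (hUp : ∀ f ∈ U, r p + γ ≤ f p) (hDp : ∀ f ∈ D, f p ≤ r p - γ) :
    #(fatShatterer U γ r P) + #(fatShatterer D γ r P) ≤ #(fatShatterer (U ∪ D) γ r P) := by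
  classical
  have hpU : ∀ S ∈ fatShatterer U γ r P, p ∉ S := fun S hS hpS ↦ by
    obtain ⟨f, hf, hfp⟩ := (mem_fatShatterer.1 hS).2.exists_le_sub hpS
    linarith [hUp f hf]
  have hpD : ∀ S ∈ fatShatterer D γ r P, p ∉ S := fun S hS hpS ↦ by
    obtain ⟨f, hf, hfp⟩ := (mem_fatShatterer.1 hS).2.exists_add_le hpS
    linarith [hDp f hf]
  set both := fatShatterer U γ r P ∩ fatShatterer D γ r P
  have hinj : Set.InjOn (insert p) (both : Set (Finset X)) :=
    insert_erase_invOn.2.injOn.mono fun S hS ↦ hpU S (mem_of_mem_inter_left hS)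
  have hdisj : Disjoint (fatShatterer U γ r P ∪ fatShatterer D γ r P) (both.image (insert p)) := by
    refine disjoint_right.2 fun S hS hS' ↦ ?_
    obtain ⟨S, -, rfl⟩ := mem_image.1 hS
    exact (mem_union.1 hS').elim (hpU _ · (mem_insert_self p S)) (hpD _ · (mem_insert_self p S))
  rw [← card_union_add_card_inter, ← card_image_of_injOn hinj, ← card_union_of_disjoint hdisj]
  refine card_le_card (union_subset (union_subset ?_ ?_) (image_subset_iff.2 ?_))
  · exact fun S hS ↦ mem_fatShatterer.2
      ((mem_fatShatterer.1 hS).imp_right (·.mono Set.subset_union_left))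
  · exact fun S hS ↦ mem_fatShatterer.2
      ((mem_fatShatterer.1 hS).imp_right (·.mono Set.subset_union_right))
  · intro S hS
    obtain ⟨hSP, hSU⟩ := mem_fatShatterer.1 (mem_of_mem_inter_left hS)
    have hSD := (mem_fatShatterer.1 (mem_of_mem_inter_right hS)).2
    exact mem_fatShatterer.2 ⟨insert_subset hp hSP, hSU.insert_union hSD hUp hDp⟩

lemma card_fatShatterer_mono (hFG : F ⊆ G) :
    #(fatShatterer F γ r P) ≤ #(fatShatterer G γ r P) :=
  card_le_card fun _ hS ↦ mem_fatShatterer.2 ((mem_fatShatterer.1 hS).imp_right (·.mono hFG))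

lemma sqrt_card_le_card_fatShatterer (hγ : 0 < γ) (v : E → X → ℝ) {A : Finset E}
    (hA : A.Nonempty)
    (hsplit : ∀ B ⊆ A, 2 ≤ #B →
      ∃ p ∈ P, IsSqrtSplit B {f ∈ B | v f p ≤ r p - γ} {f ∈ B | r p + γ ≤ v f p}) :
    √(#A : ℝ) ≤ #(fatShatterer (v '' A) γ r P) := by
  induction A using Finset.strongInduction with
  | H A ih =>
  obtain hA2 | hA1 := le_or_gt 2 #A
  · obtain ⟨p, hp, hDne, hUne, hsqrt⟩ := hsplit A Subset.rfl hA2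
    set D := {f ∈ A | v f p ≤ r p - γ}
    set U := {f ∈ A | r p + γ ≤ v f p}
    have hDp : ∀ f ∈ D, v f p ≤ r p - γ := fun f hf ↦ (mem_filter.1 hf).2
    have hUp : ∀ f ∈ U, r p + γ ≤ v f p := fun f hf ↦ (mem_filter.1 hf).2
    have hDA : D ⊂ A := by
      obtain ⟨f, hf⟩ := hUne
      exact filter_ssubset.2 ⟨f, (mem_filter.1 hf).1, by linarith [hUp f hf]⟩
    have hUA : U ⊂ A := by
      obtain ⟨f, hf⟩ := hDne
      exact filter_ssubset.2 ⟨f, (mem_filter.1 hf).1, by linarith [hDp f hf]⟩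
    calc √(#A : ℝ) ≤ √(#D : ℝ) + √(#U : ℝ) := hsqrt
      _ ≤ #(fatShatterer (v '' D) γ r P) + #(fatShatterer (v '' U) γ r P) :=
          add_le_add (ih D hDA hDne fun B hB ↦ hsplit B (hB.trans hDA.subset))
            (ih U hUA hUne fun B hB ↦ hsplit B (hB.trans hUA.subset))
      _ ≤ #(fatShatterer (v '' U ∪ v '' D) γ r P) := by
          rw [add_comm]
          exact_mod_cast card_fatShatterer_add_card_fatShatterer_le hγ hp
            (Set.forall_mem_image.2 hUp) (Set.forall_mem_image.2 hDp)
      _ ≤ #(fatShatterer (v '' A) γ r P) := by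
          refine Nat.cast_le.2 (card_fatShatterer_mono (Set.union_subset ?_ ?_))
          exacts [Set.image_mono hUA.subset, Set.image_mono hDA.subset]
  · have hempty : ∅ ∈ fatShatterer (v '' A) γ r P :=
      mem_fatShatterer.2 ⟨empty_subset P, .empty (hA.to_set.image v)⟩
    rw [show #A = 1 by have := hA.card_pos; omega, Nat.cast_one, Real.sqrt_one]
    exact_mod_cast card_pos.2 ⟨∅, hempty⟩

lemma card_mul_pow_le_exp {𝒮 : Finset (Finset X)} {d : ℕ} {l : ℝ} (hl : 0 ≤ l) (hl1 : l ≤ 1)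
    (h𝒮 : ∀ S ∈ 𝒮, S ⊆ P ∧ #S ≤ d) : #𝒮 * l ^ d ≤ Real.exp (l * #P) :=
  calc #𝒮 * l ^ d = ∑ _S ∈ 𝒮, l ^ d := by rw [sum_const, nsmul_eq_mul]
    _ ≤ ∑ S ∈ 𝒮, l ^ #S := sum_le_sum fun S hS ↦ pow_le_pow_of_le_one hl hl1 (h𝒮 S hS).2
    _ ≤ ∑ S ∈ P.powerset, l ^ #S :=
        sum_le_sum_of_subset_of_nonneg (fun S hS ↦ mem_powerset.2 (h𝒮 S hS).1)
          fun _ _ _ ↦ by positivity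
    _ = (l + 1) ^ #P := by simpa using sum_pow_mul_eq_add_pow l 1 P
    _ ≤ Real.exp l ^ #P := by
        gcongr
        exact Real.add_one_le_exp l
    _ = Real.exp (l * #P) := by rw [← Real.exp_nat_mul, mul_comm]

/-! ### Fat-shattering dimension -/

lemma FatShatters.card_le_fatDim (h : FatShatters F γ S) : (#S : ℕ∞) ≤ fatDim F γ :=
  le_iSup₂ (f := fun (S : Finset X) (_ : FatShatters F γ S) ↦ (#S : ℕ∞)) S h

lemma fatDim_mono (hFG : F ⊆ G) : fatDim F γ ≤ fatDim G γ :=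
  iSup₂_le fun _ ⟨_, hS⟩ ↦ (FatShattersAt.mono hS hFG).fatShatters.card_le_fatDim

lemma fatDim_eq_zero_of_lt {a b : ℝ} (hF : ∀ f ∈ F, ∀ x, f x ∈ Set.Icc a b)
    (hγ : b - a < 2 * γ) : fatDim F γ = 0 := by
  refine nonpos_iff_eq_zero.1 (iSup₂_le fun S ⟨r, hS⟩ ↦ ?_)
  suffices S = ∅ by simp [this]
  refine eq_empty_of_forall_notMem fun x hx ↦ ?_
  obtain ⟨f, hf, hlow⟩ := FatShattersAt.exists_le_sub hS hx
  obtain ⟨g, hg, hhigh⟩ := FatShattersAt.exists_add_le hS hx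
  linarith [(hF f hf x).1, (hF g hg x).2]

lemma FatShattersAt.injOn_of_comp {r : Y → ℝ} {T : Finset Y} {π : Y → X} (hγ : 0 < γ)
    (hT : FatShattersAt ((· ∘ π) '' F) γ r T) : Set.InjOn π T := by
  have hlevel : ∀ p ∈ T, ∀ q ∈ T, p ≠ q → π p = π q → r p + γ ≤ r q - γ := by
    intro p hp q hq hpq hπ
    obtain ⟨_, ⟨f, -, rfl⟩, hfp, hfq⟩ := hT.exists_add_le_and_le_sub hp hq hpq
    simp only [Function.comp_apply, hπ] at hfp hfq
    exact hfp.trans hfq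
  intro p hp q hq hπ
  by_contra hpq
  linarith [hlevel p hp q hq hpq hπ, hlevel q hq p hp (Ne.symm hpq) hπ.symm]

lemma FatShatters.image_of_comp [DecidableEq X] {T : Finset Y} {π : Y → X} (hγ : 0 < γ)
    (hT : FatShatters ((· ∘ π) '' F) γ T) : FatShatters F γ (T.image π) := by
  classical
  obtain ⟨r, hT⟩ := hT
  obtain rfl | ⟨y, -⟩ := T.eq_empty_or_nonempty
  · obtain ⟨_, ⟨f, hf, -⟩, -⟩ := hT ∅ Subset.rfl
    exact (FatShattersAt.empty (r := 0) ⟨f, hf⟩).fatShatters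
  have : Nonempty Y := ⟨y⟩
  have hinv : ∀ p ∈ T, Function.invFunOn π T (π p) = p :=
    fun _ hp ↦ (FatShattersAt.injOn_of_comp hγ hT).leftInvOn_invFunOn hp
  refine ⟨r ∘ Function.invFunOn π T, fun B hB ↦ ?_⟩
  obtain ⟨_, ⟨f, hf, rfl⟩, hhigh, hlow⟩ := hT {p ∈ T | π p ∈ B} (filter_subset _ _)
  refine ⟨f, hf, fun x hx ↦ ?_, fun x hx hxB ↦ ?_⟩
  · obtain ⟨p, hp, rfl⟩ := mem_image.1 (hB hx)
    simpa only [Function.comp_apply, hinv p hp] using hhigh p (mem_filter.2 ⟨hp, hx⟩)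
  · obtain ⟨p, hp, rfl⟩ := mem_image.1 hx
    simpa only [Function.comp_apply, hinv p hp] using hlow p hp fun h ↦ hxB (mem_filter.1 h).2

lemma fatDim_image_comp_le (π : Y → X) (hγ : 0 < γ) : fatDim ((· ∘ π) '' F) γ ≤ fatDim F γ := by
  classical
  refine iSup₂_le fun T hT ↦ ?_
  have ⟨r, hr⟩ := hT
  rw [← card_image_of_injOn (FatShattersAt.injOn_of_comp hγ hr)]
  exact (hT.image_of_comp hγ).card_le_fatDim

end FatShattering

/-! ### Subsampling coordinates -/

section Subsampling

variable {ι κ : Type*} [Fintype κ]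

lemma exp_neg_le_one_sub_half {y : ℝ} (hy0 : 0 ≤ y) (hy1 : y ≤ 1) : Real.exp (-y) ≤ 1 - y / 2 := by
  have hexp : Real.exp (-1) ≤ 1 / 2 := by
    rw [Real.exp_neg, inv_le_comm₀ (Real.exp_pos _) (by norm_num)]
    linarith [Real.add_one_le_exp (1 : ℝ)]
  have hconv := convexOn_exp.2 (Set.mem_univ (0 : ℝ)) (Set.mem_univ (-1 : ℝ))
    (sub_nonneg.2 hy1) hy0 (sub_add_cancel _ _)
  simp only [smul_eq_mul, mul_zero, zero_add, Real.exp_zero, mul_one, mul_neg] at hconv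
  nlinarith

lemma sum_exp_neg_le {y : κ → ℝ} {μ : ℝ} (hy : ∀ i, y i ∈ Set.Icc 0 1)
    (hμ : Fintype.card κ * μ ≤ ∑ i, y i) :
    ∑ i, Real.exp (-y i) ≤ Fintype.card κ * Real.exp (-(μ / 2)) :=
  calc ∑ i, Real.exp (-y i) ≤ ∑ i, (1 - y i / 2) :=
        sum_le_sum fun i _ ↦ exp_neg_le_one_sub_half (hy i).1 (hy i).2
    _ = Fintype.card κ - (∑ i, y i) / 2 := by simp [sum_sub_distrib, sum_div]
    _ ≤ Fintype.card κ * (1 - μ / 2) := by linarith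
    _ ≤ Fintype.card κ * Real.exp (-(μ / 2)) := by
        gcongr
        linarith [Real.add_one_le_exp (-(μ / 2))]

-- The first-moment method, for the exponential moments of a uniformly random `φ`.
lemma exists_forall_mul_div_four_le_sum [Nonempty κ] {Q : Finset ι} {Y : ι → κ → ℝ} {μ : ℝ}
    {k : ℕ} (hY : ∀ p ∈ Q, ∀ i, Y p i ∈ Set.Icc 0 1)
    (hμ : ∀ p ∈ Q, Fintype.card κ * μ ≤ ∑ i, Y p i) (hQ : #Q ≤ Real.exp (k * μ / 4)) :
    ∃ φ : Fin k → κ, ∀ p ∈ Q, k * μ / 4 ≤ ∑ j, Y p (φ j) := by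
  have hmean : ∑ φ : Fin k → κ, ∑ p ∈ Q, ∏ j, Real.exp (-Y p (φ j)) ≤
      ∑ _φ : Fin k → κ, Real.exp (-(k * μ / 4)) := by
    calc ∑ φ : Fin k → κ, ∑ p ∈ Q, ∏ j, Real.exp (-Y p (φ j))
        = ∑ p ∈ Q, (∑ i, Real.exp (-Y p i)) ^ k := by
          rw [sum_comm]
          exact sum_congr rfl fun p _ ↦ (Fintype.sum_pow (fun i ↦ Real.exp (-Y p i)) k).symm
      _ ≤ ∑ _p ∈ Q, (Fintype.card κ * Real.exp (-(μ / 2))) ^ k := by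
          gcongr with _ hp
          exact sum_exp_neg_le (hY _ hp) (hμ _ hp)
      _ = #Q * (Fintype.card κ ^ k * Real.exp (-(k * μ / 2))) := by
          rw [sum_const, nsmul_eq_mul, mul_pow, ← Real.exp_nat_mul]
          ring_nf
      _ ≤ Real.exp (k * μ / 4) * (Fintype.card κ ^ k * Real.exp (-(k * μ / 2))) := by gcongr
      _ = Fintype.card κ ^ k * Real.exp (-(k * μ / 4)) := by
          rw [mul_left_comm, ← Real.exp_add]
          ring_nf
      _ = ∑ _φ : Fin k → κ, Real.exp (-(k * μ / 4)) := by simp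
  obtain ⟨φ, -, hφ⟩ := exists_le_of_sum_le univ_nonempty hmean
  refine ⟨φ, fun p hp ↦ ?_⟩
  have hexp : ∏ j, Real.exp (-Y p (φ j)) ≤ Real.exp (-(k * μ / 4)) :=
    (single_le_sum (f := fun p ↦ ∏ j, Real.exp (-Y p (φ j))) (fun _ _ ↦ by positivity) hp).trans hφ
  rw [← Real.exp_sum, Real.exp_le_exp, sum_neg_distrib] at hexp
  exact neg_le_neg_iff.1 hexp

lemma exists_subsample_pairwise_le_sum_sq_sub [Nonempty κ] {A : Finset (κ → ℝ)} {a b ζ : ℝ}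
    {k : ℕ} (hab : a < b) (hA : ∀ f ∈ A, ∀ i, f i ∈ Set.Icc a b)
    (hsep : (A : Set (κ → ℝ)).Pairwise fun f g ↦ Fintype.card κ * ζ ^ 2 ≤ ∑ i, (f i - g i) ^ 2)
    (hk : (#A : ℝ) ^ 2 ≤ Real.exp (k * (ζ / (b - a)) ^ 2 / 4)) :
    ∃ φ : Fin k → κ, (A : Set (κ → ℝ)).Pairwise fun f g ↦
      k * (ζ / 2) ^ 2 ≤ ∑ j, (f (φ j) - g (φ j)) ^ 2 := by
  classical
  have hR : 0 < b - a := sub_pos.2 hab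
  obtain ⟨φ, hφ⟩ := exists_forall_mul_div_four_le_sum (Q := A.offDiag) (k := k)
    (Y := fun p i ↦ ((p.1 i - p.2 i) / (b - a)) ^ 2) (μ := (ζ / (b - a)) ^ 2)
    (fun p hp i ↦ by
      obtain ⟨hf, hg, -⟩ := mem_offDiag.1 hp
      refine ⟨by positivity, (sq_le_one_iff_abs_le_one _).2 ?_⟩
      rw [abs_div, abs_of_pos hR, div_le_one hR]
      exact Real.dist_le_of_mem_Icc (hA _ hf i) (hA _ hg i))
    (fun p hp ↦ by
      obtain ⟨hf, hg, hfg⟩ := mem_offDiag.1 hp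
      simp only [div_pow, ← sum_div, ← mul_div_assoc]
      gcongr
      exact hsep hf hg hfg)
    (by
      refine le_trans ?_ hk
      rw [offDiag_card, sq]
      exact_mod_cast Nat.sub_le _ _)
  refine ⟨φ, fun f hf g hg hfg ↦ ?_⟩
  have hsum := hφ (f, g) (mem_offDiag.2 ⟨hf, hg, hfg⟩)
  simp only [div_pow, ← sum_div, ← mul_div_assoc] at hsum
  rw [div_div, mul_comm _ (4 : ℝ), ← div_div, div_le_div_iff_of_pos_right (by positivity)] at hsum
  linarith

lemma exists_nat_mul_sq_mem_Icc {t L : ℝ} (ht : 0 < t) (ht1 : t ≤ 1) (hL : 1 / 2 ≤ L) :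
    ∃ k : ℕ, k * t ^ 2 ∈ Set.Icc (8 * L) (10 * L) := by
  have ht2 : 0 < t ^ 2 := pow_pos ht 2
  refine ⟨⌈8 * L / t ^ 2⌉₊, (div_le_iff₀ ht2).1 (Nat.le_ceil _), ?_⟩
  calc ⌈8 * L / t ^ 2⌉₊ * t ^ 2 ≤ (8 * L / t ^ 2 + 1) * t ^ 2 := by
        gcongr
        exact (Nat.ceil_lt_add_one (by positivity)).le
    _ = 8 * L + t ^ 2 := by rw [add_mul, div_mul_cancel₀ _ ht2.ne', one_mul]
    _ ≤ 10 * L := by linarith [pow_le_one₀ (n := 2) ht.le ht1]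

lemma exists_subsample_le_log_card [Nonempty κ] {A : Finset (κ → ℝ)} {a b ζ : ℝ} (hζ : 0 < ζ)
    (hζab : ζ ≤ b - a) (hA2 : 2 ≤ #A) (hA : ∀ f ∈ A, ∀ i, f i ∈ Set.Icc a b)
    (hsep : (A : Set (κ → ℝ)).Pairwise fun f g ↦
      Fintype.card κ * ζ ^ 2 ≤ ∑ i, (f i - g i) ^ 2) :
    ∃ k : ℕ, 0 < k ∧ k * (ζ / (b - a)) ^ 2 ≤ 10 * Real.log #A ∧
      ∃ φ : Fin k → κ, (A : Set (κ → ℝ)).Pairwise fun f g ↦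
        k * (ζ / 2) ^ 2 ≤ ∑ j, (f (φ j) - g (φ j)) ^ 2 := by
  have hab : 0 < b - a := hζ.trans_le hζab
  have hlog : 1 / 2 ≤ Real.log #A := by
    have := Real.log_le_log two_pos (Nat.ofNat_le_cast.2 hA2 : (2 : ℝ) ≤ #A)
    linarith [Real.log_two_gt_d9]
  obtain ⟨k, hk8, hk10⟩ :=
    exists_nat_mul_sq_mem_Icc (div_pos hζ hab) ((div_le_one hab).2 hζab) hlog
  refine ⟨k, Nat.pos_of_ne_zero ?_, hk10,
    exists_subsample_pairwise_le_sum_sq_sub (sub_pos.1 hab) hA hsep ?_⟩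
  · rintro rfl
    rw [Nat.cast_zero, zero_mul] at hk8
    linarith
  · rw [← Real.exp_log (Nat.cast_pos.2 (two_pos.trans_le hA2) : (0 : ℝ) < #A),
      ← Real.exp_nat_mul, Real.exp_le_exp]
    push_cast
    linarith

end Subsampling

/-! ### Separated families in low dimension -/

/-- The coordinate-level pairs to be shattered: `(i, z)` stands for the coordinate `i` with the
level `2γz`, and the levels are those lying in `[a, b]`. -/
noncomputable def thresholdGrid (κ : Type*) [Fintype κ] (a b γ : ℝ) : Finset (κ × ℤ) :=
  univ ×ˢ Icc ⌈a / (2 * γ)⌉ ⌊b / (2 * γ)⌋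

section Separated

variable {κ E : Type*} [Fintype κ] {v : E → κ → ℝ} {A B : Finset E} {a b γ : ℝ}

lemma card_thresholdGrid_le (hab : a ≤ b) (hγ : 0 < γ) :
    (#(thresholdGrid κ a b γ) : ℝ) ≤ Fintype.card κ * ((b - a) / (2 * γ) + 1) := by
  have hlevels : ((⌊b / (2 * γ)⌋ + 1 - ⌈a / (2 * γ)⌉).toNat : ℝ) ≤ (b - a) / (2 * γ) + 1 := by
    rw [← Int.cast_natCast, Int.toNat_eq_max]
    have : a / (2 * γ) ≤ b / (2 * γ) := by gcongr
    push_cast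
    rw [sub_div]
    refine max_le ?_ (by linarith)
    linarith [Int.floor_le (b / (2 * γ)), Int.le_ceil (a / (2 * γ))]
  rw [thresholdGrid, card_product, card_univ, Int.card_Icc]
  push_cast
  gcongr

lemma exists_coord_le_sum_sum_sq_sub [Nonempty κ] {c : ℝ} (hc : 0 ≤ c) (hB : 2 ≤ #B)
    (hsep : (B : Set E).Pairwise fun f g ↦ Fintype.card κ * c ≤ ∑ i, (v f i - v g i) ^ 2) :
    ∃ i, (#B : ℝ) ^ 2 * c / 2 ≤ ∑ f ∈ B, ∑ g ∈ B, (v f i - v g i) ^ 2 := by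
  classical
  have hpairs : (#B : ℝ) ^ 2 / 2 ≤ #B.offDiag := by
    have hB' : (2 : ℝ) ≤ #B := by exact_mod_cast hB
    rw [offDiag_card, Nat.cast_sub (Nat.le_mul_self _)]
    push_cast
    nlinarith
  have htotal : ∑ _i : κ, (#B : ℝ) ^ 2 * c / 2 ≤
      ∑ i, ∑ f ∈ B, ∑ g ∈ B, (v f i - v g i) ^ 2 := by
    calc ∑ _i : κ, (#B : ℝ) ^ 2 * c / 2 = (#B : ℝ) ^ 2 / 2 * (Fintype.card κ * c) := by
          rw [sum_const, nsmul_eq_mul, card_univ]; ring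
      _ ≤ #B.offDiag * (Fintype.card κ * c) := by gcongr
      _ = ∑ _p ∈ B.offDiag, (Fintype.card κ * c) := by rw [sum_const, nsmul_eq_mul]
      _ ≤ ∑ p ∈ B.offDiag, ∑ i, (v p.1 i - v p.2 i) ^ 2 := by
          refine sum_le_sum fun p hp ↦ ?_
          obtain ⟨hf, hg, hfg⟩ := mem_offDiag.1 hp
          exact hsep hf hg hfg
      _ ≤ ∑ p ∈ B ×ˢ B, ∑ i, (v p.1 i - v p.2 i) ^ 2 :=
          sum_le_sum_of_subset_of_nonneg
            (fun p hp ↦ mem_product.2 ⟨(mem_offDiag.1 hp).1, (mem_offDiag.1 hp).2.1⟩)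
            fun _ _ _ ↦ by positivity
      _ = ∑ i, ∑ f ∈ B, ∑ g ∈ B, (v f i - v g i) ^ 2 := by
          rw [sum_comm]
          exact sum_congr rfl fun i _ ↦ sum_product _ _ _
  obtain ⟨i, -, hi⟩ := exists_le_of_sum_le univ_nonempty htotal
  exact ⟨i, hi⟩

lemma exists_mem_thresholdGrid_isSqrtSplit [Nonempty κ] (hγ : 0 < γ) (hB : 2 ≤ #B)
    (hv : ∀ f ∈ B, ∀ i, v f i ∈ Set.Icc a b)
    (hsep : (B : Set E).Pairwise fun f g ↦
      Fintype.card κ * (20 * γ) ^ 2 ≤ ∑ i, (v f i - v g i) ^ 2) :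
    ∃ p ∈ thresholdGrid κ a b γ,
      IsSqrtSplit B {f ∈ B | v f p.1 ≤ 2 * γ * p.2 - γ} {f ∈ B | 2 * γ * p.2 + γ ≤ v f p.1} := by
  obtain ⟨i, hi⟩ := exists_coord_le_sum_sum_sq_sub (by positivity) hB hsep
  have hvar : 12 * (#B : ℝ) ^ 2 < ∑ f ∈ B, ∑ g ∈ B, (v f i / (4 * γ) - v g i / (4 * γ)) ^ 2 := by
    have hBγ : 0 < (#B : ℝ) ^ 2 * γ ^ 2 :=
      mul_pos (pow_pos (Nat.cast_pos.2 (two_pos.trans_le hB)) 2) (pow_pos hγ 2)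
    simp only [← sub_div, div_pow, ← sum_div]
    rw [lt_div_iff₀ (by positivity)]
    linarith
  obtain ⟨s, hs⟩ := exists_isSqrtSplit hvar
  -- The gap `(4γs, 4γs + 4γ)` contains `[2γz - γ, 2γz + γ]` for a suitable integer `z`.
  set z := ⌈2 * s + 1 / 2⌉
  have hlow : ∀ f, v f i / (4 * γ) ≤ s → v f i ≤ 2 * γ * z - γ := fun f hf ↦ by
    rw [div_le_iff₀ (by positivity)] at hf
    nlinarith [Int.le_ceil (2 * s + 1 / 2)]
  have hhigh : ∀ f, s + 1 ≤ v f i / (4 * γ) → 2 * γ * z + γ ≤ v f i := fun f hf ↦ by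
    rw [le_div_iff₀ (by positivity)] at hf
    nlinarith [Int.ceil_lt_add_one (2 * s + 1 / 2)]
  have hsplit : IsSqrtSplit B {f ∈ B | v f i ≤ 2 * γ * z - γ} {f ∈ B | 2 * γ * z + γ ≤ v f i} :=
    hs.mono (monotone_filter_right B fun f _ ↦ hlow f) (monotone_filter_right B fun f _ ↦ hhigh f)
  refine ⟨(i, z), mem_product.2 ⟨mem_univ _, ?_⟩, hsplit⟩
  obtain ⟨f, hf⟩ := hsplit.nonempty_left
  obtain ⟨g, hg⟩ := hsplit.nonempty_right
  rw [mem_filter] at hf hg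
  rw [mem_Icc, Int.ceil_le, Int.le_floor, div_le_iff₀' (by positivity),
    le_div_iff₀' (by positivity)]
  constructor <;> linarith [(hv f hf.1 i).1, (hv g hg.1 i).2]

lemma sqrt_card_mul_pow_le_exp [Nonempty κ] {d : ℕ} {l : ℝ} (hγ : 0 < γ) (hA : A.Nonempty)
    (hv : ∀ f ∈ A, ∀ i, v f i ∈ Set.Icc a b)
    (hsep : (A : Set E).Pairwise fun f g ↦
      Fintype.card κ * (20 * γ) ^ 2 ≤ ∑ i, (v f i - v g i) ^ 2)
    (hd : fatDim (v '' A) γ ≤ d) (hl : 0 ≤ l) (hl1 : l ≤ 1) :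
    √(#A : ℝ) * l ^ d ≤ Real.exp (l * (Fintype.card κ * ((b - a) / (2 * γ) + 1))) := by
  have hab : a ≤ b := by
    obtain ⟨f, hf⟩ := hA
    obtain ⟨i⟩ := ‹Nonempty κ›
    exact (hv f hf i).1.trans (hv f hf i).2
  set 𝒮 := fatShatterer ((fun f (p : κ × ℤ) ↦ v f p.1) '' A) γ (fun p ↦ 2 * γ * p.2)
    (thresholdGrid κ a b γ)
  have hmany : √(#A : ℝ) ≤ #𝒮 :=
    sqrt_card_le_card_fatShatterer hγ _ hA fun B hB hB2 ↦
      exists_mem_thresholdGrid_isSqrtSplit hγ hB2 (fun f hf ↦ hv f (hB hf))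
        (hsep.mono (coe_subset.2 hB))
  have hsmall : ∀ S ∈ 𝒮, S ⊆ thresholdGrid κ a b γ ∧ #S ≤ d := fun S hS ↦ by
    obtain ⟨hSP, hS⟩ := mem_fatShatterer.1 hS
    have himage : (fun f (p : κ × ℤ) ↦ v f p.1) '' (A : Set E) =
        (· ∘ Prod.fst) '' (v '' (A : Set E)) := by
      rw [Set.image_image]; rfl
    rw [himage] at hS
    exact ⟨hSP, Nat.cast_le.1 <|
      hS.fatShatters.card_le_fatDim.trans <| (fatDim_image_comp_le _ hγ).trans hd⟩
  calc √(#A : ℝ) * l ^ d ≤ #𝒮 * l ^ d := by gcongr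
    _ ≤ Real.exp (l * #(thresholdGrid κ a b γ)) := card_mul_pow_le_exp hl hl1 hsmall
    _ ≤ Real.exp (l * (Fintype.card κ * ((b - a) / (2 * γ) + 1))) := by
        gcongr
        exact card_thresholdGrid_le hab hγ

end Separated

/-! ### Packing numbers -/

/-- The normalized Euclidean distance on `ℝ^ι`, agreeing with `d2` when `ι = Fin (2 * m)`.
It is `0` when `ι` is empty, because of the division by `0`. -/
noncomputable def rmsDist {ι : Type*} [Fintype ι] (g h : ι → ℝ) : ℝ :=
  √((∑ i, (g i - h i) ^ 2) / Fintype.card ι)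

lemma d2_eq_rmsDist (m : ℕ) : d2 (m := m) = rmsDist := by
  ext g h
  rw [d2, rmsDist, Fintype.card_fin, one_div_mul_eq_div]
  push_cast
  rfl

lemma exp_le_pow_of_exp_half_mul_le {L ρ : ℝ} {d : ℕ} (hρ : 0 < ρ)
    (h : Real.exp (L / 2) * ((ρ ^ 3)⁻¹) ^ d ≤ Real.exp (L / 4)) : Real.exp L ≤ ρ ^ (12 * d) := by
  rw [inv_pow, ← pow_mul, mul_inv_le_iff₀ (by positivity)] at h
  have hquarter : Real.exp (L / 4) ≤ ρ ^ (3 * d) := by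
    rw [← mul_le_mul_iff_right₀ (Real.exp_pos (L / 4)), ← Real.exp_add]
    convert h using 2
    ring
  calc Real.exp L = Real.exp (L / 4) ^ 4 := by rw [← Real.exp_nat_mul]; ring_nf
    _ ≤ (ρ ^ (3 * d)) ^ 4 := by gcongr
    _ = ρ ^ (12 * d) := by rw [← pow_mul]; ring_nf

section Packing

variable {ι : Type*} [Fintype ι] {g h : ι → ℝ} {A : Finset (ι → ℝ)} {a b γ ζ : ℝ}

lemma lt_rmsDist_iff [Nonempty ι] (hζ : 0 ≤ ζ) :
    ζ < rmsDist g h ↔ Fintype.card ι * ζ ^ 2 < ∑ i, (g i - h i) ^ 2 := by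
  rw [rmsDist, Real.lt_sqrt hζ, lt_div_iff₀' (Nat.cast_pos.2 Fintype.card_pos)]

lemma rmsDist_le_of_mem_Icc [Nonempty ι] (hg : ∀ i, g i ∈ Set.Icc a b)
    (hh : ∀ i, h i ∈ Set.Icc a b) : rmsDist g h ≤ b - a := by
  have hab : 0 ≤ b - a := by
    obtain ⟨i⟩ := ‹Nonempty ι›
    linarith [(hg i).1, (hg i).2]
  rw [rmsDist, Real.sqrt_le_iff, div_le_iff₀' (Nat.cast_pos.2 Fintype.card_pos)]
  refine ⟨hab, ?_⟩
  calc ∑ i, (g i - h i) ^ 2 ≤ ∑ _i : ι, (b - a) ^ 2 :=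
        sum_le_sum fun i _ ↦ sq_le_sq' (by linarith [(hg i).1, (hh i).2])
          (by linarith [(hg i).2, (hh i).1])
    _ = Fintype.card ι * (b - a) ^ 2 := by rw [sum_const, nsmul_eq_mul, card_univ]

lemma card_le_pow_of_pairwise_lt_rmsDist {d : ℕ} (hγ : 0 < γ)
    (hA : ∀ f ∈ A, ∀ i, f i ∈ Set.Icc a b)
    (hsep : (A : Set (ι → ℝ)).Pairwise fun f g ↦ 40 * γ < rmsDist f g) (hA2 : 2 ≤ #A)
    (hd : fatDim (A : Set (ι → ℝ)) γ ≤ d) : (#A : ℝ) ≤ ((b - a) / γ) ^ (12 * d) := by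
  obtain ⟨f, hf, g, hg, hfg⟩ := one_lt_card.1 hA2
  obtain ⟨i, -⟩ := Function.ne_iff.1 hfg
  have : Nonempty ι := ⟨i⟩
  have hdiam : 40 * γ < b - a :=
    (hsep hf hg hfg).trans_le (rmsDist_le_of_mem_Icc (hA f hf) (hA g hg))
  obtain ⟨k, hk, hklog, φ, hφ⟩ := exists_subsample_le_log_card (by positivity) hdiam.le hA2 hA
    fun f hf g hg hfg ↦ ((lt_rmsDist_iff (by positivity)).1 (hsep hf hg hfg)).le
  have : Nonempty (Fin k) := ⟨⟨0, hk⟩⟩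
  set ρ := (b - a) / γ with hρ
  set L := Real.log #A
  have hexpL : Real.exp L = #A := Real.exp_log (Nat.cast_pos.2 (two_pos.trans_le hA2))
  have hL : 0 ≤ L := Real.log_natCast_nonneg _
  have hρ40 : 40 < ρ := (lt_div_iff₀ hγ).2 hdiam
  have hkρ : k ≤ L * ρ ^ 2 / 160 := by
    rw [← div_div_eq_mul_div, ← hρ, div_pow, ← mul_div_assoc, div_le_iff₀ (by positivity)] at hklog
    linarith
  have hexponent : (ρ ^ 3)⁻¹ * (k * ((b - a) / (2 * γ) + 1)) ≤ L / 4 := by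
    rw [show (b - a) / (2 * γ) = ρ / 2 by rw [hρ, div_div, mul_comm 2 γ]]
    calc (ρ ^ 3)⁻¹ * (k * (ρ / 2 + 1)) ≤ (ρ ^ 3)⁻¹ * (L * ρ ^ 2 / 160 * ρ) := by
          gcongr
          linarith
      _ = L / 160 := by field_simp
      _ ≤ L / 4 := by linarith
  -- The weight `l = ρ⁻³` makes `l` times the number of thresholds negligible against `L`.
  have hsqrt := sqrt_card_mul_pow_le_exp (v := fun f j ↦ f (φ j)) (l := (ρ ^ 3)⁻¹) hγ ⟨f, hf⟩
    (fun f hf j ↦ hA f hf (φ j))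
    (by rwa [Fintype.card_fin, show 20 * γ = 40 * γ / 2 by ring])
    ((fatDim_image_comp_le φ hγ).trans hd) (by positivity)
    (inv_le_one_of_one_le₀ (one_le_pow₀ (by linarith)))
  rw [Fintype.card_fin, ← hexpL, ← Real.exp_half] at hsqrt
  rw [← hexpL]
  exact exp_le_pow_of_exp_half_mul_le (by linarith) (hsqrt.trans (Real.exp_le_exp.2 hexponent))

end Packing

theorem rudelson_vershynin_packing_general {X ι : Type*} [Fintype ι] {F : Set (X → ℝ)}
    {a b ζ : ℝ} (hF : ∀ f ∈ F, ∀ y, f y ∈ Set.Icc a b) (x : ι → X) (hζ : 0 < ζ)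
    (hfat : fatDim F (1 / 40 * ζ) ≠ ⊤) :
    packingNumber ((· ∘ x) '' F) rmsDist ζ ≤
      (⌊((b - a) / (1 / 40 * ζ)) ^ (12 * ((fatDim F (1 / 40 * ζ)).toNat : ℝ))⌋₊ : ℕ∞) := by
  have hγ : 0 < 1 / 40 * ζ := by positivity
  refine iSup₂_le fun A ⟨hAF, hsep⟩ ↦ Nat.cast_le.2 (Nat.le_floor ?_)
  obtain hA2 | hA1 := le_or_gt 2 #A
  · have hA : ∀ f ∈ A, ∀ i, f i ∈ Set.Icc a b := fun f hf ↦ by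
      obtain ⟨f, hfF, rfl⟩ := hAF hf
      exact fun i ↦ hF f hfF (x i)
    have hd : fatDim (A : Set (ι → ℝ)) (1 / 40 * ζ) ≤ (fatDim F (1 / 40 * ζ)).toNat := by
      rw [ENat.natCast_toNat hfat]
      exact (fatDim_mono hAF).trans (fatDim_image_comp_le x hγ)
    have hcard := card_le_pow_of_pairwise_lt_rmsDist hγ hA
      (fun f hf g hg hfg ↦ by convert hsep f hf g hg hfg using 1; ring) hA2 hd
    exact_mod_cast hcard
  · refine (Nat.cast_le_one.2 (by omega)).trans ?_
    obtain hsmall | hlarge := lt_or_ge (b - a) (2 * (1 / 40 * ζ))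
    · rw [fatDim_eq_zero_of_lt hF hsmall]
      simp
    · exact Real.one_le_rpow ((one_le_div hγ).2 (by linarith)) (by positivity)

/-- **Rudelson–Vershynin packing bound.** There are universal constants `C̃, c̃ > 0` such
that, for any class `F` of `[a,b]`-valued functions, any sample `x ∈ X^{2m}` and any
`0 < ζ < (b-a)/2` with `fat_{c̃ζ}(F) < ∞`, the `ζ`-packing number of the restricted class
`F(x)` in `(ℝ^{2m}, d₂)` is at most `((b-a)/(c̃ζ))^{C̃·fat_{c̃ζ}(F)}`; in particular it is
finite. -/
theorem rudelson_vershynin_packing :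
    ∃ Ct ct : ℝ, 0 < Ct ∧ 0 < ct ∧
      ∀ {X : Type} (F : Set (X → ℝ)) (a b : ℝ), a < b →
        (∀ f ∈ F, ∀ y, f y ∈ Set.Icc a b) →
        ∀ (m : ℕ) (x : Fin (2 * m) → X) (ζ : ℝ), 0 < ζ → ζ < (b - a) / 2 →
          fatDim F (ct * ζ) < ⊤ →
          packingNumber {g : Fin (2 * m) → ℝ | ∃ f ∈ F, ∀ i, g i = f (x i)}
              (d2 (m := m)) ζ
            ≤ (⌊((b - a) / (ct * ζ)) ^ (Ct * ((fatDim F (ct * ζ)).toNat : ℝ))⌋₊ : ℕ∞) := by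
  refine ⟨12, 1 / 40, by norm_num, by norm_num, fun F a b _ hF m x ζ hζ _ hfat ↦ ?_⟩
  have hrestrict : {g : Fin (2 * m) → ℝ | ∃ f ∈ F, ∀ i, g i = f (x i)} = (· ∘ x) '' F := by
    ext g
    simp only [Set.mem_ofPred_eq, Set.mem_image, funext_iff, Function.comp_apply, eq_comm]
  rw [hrestrict, d2_eq_rmsDist]
  exact rudelson_vershynin_packing_general hF x hζ hfat.ne
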